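/- arXiv:2504.01761 — 2 statements merged into one kernel-verified Lean document; each statement's English description precedes it below -/
import Mathlib

section
/- Let ν be a Borel probability measure on ℝ whose characteristic function φ_ν(t) = ∫ e^{itu} dν(u) is nonvanishing on ℝ, and let K : ℝ → ℝ be continuous and Lebesgue integrable with Fourier transform φ_K(t) = ∫ e^{itv} K(v) dv integrable and supported in [−1,1]. Then for every Borel probability measure μ on ℝ, every x ∈ ℝ and every h > 0, the deconvolution kernel satisfies ∫ K_{ν,h}(x − w) d(μ ∗ ν)(w) = ∫ h^{-1} K((x − u)/h) dμ(u), where μ ∗ ν is the convolution of μ and ν. -/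
open MeasureTheory Filter Set
open scoped Topology

/-- Characteristic function of a measure `ν` on `ℝ`: `φ_ν(t) = ∫ e^{itu} dν(u)`. -/
noncomputable def charFunM (ν : Measure ℝ) (t : ℝ) : ℂ :=
  ∫ u, Complex.exp (Complex.I * (t : ℂ) * (u : ℂ)) ∂ν

/-- Fourier transform of a kernel `K`: `φ_K(t) = ∫ e^{itv} K(v) dv`. -/
noncomputable def fourierK (K : ℝ → ℝ) (t : ℝ) : ℂ :=
  ∫ v : ℝ, Complex.exp (Complex.I * (t : ℂ) * (v : ℂ)) * (K v : ℂ)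

/-- The deconvolution kernel
`K_{ν,h}(x) = (1/(2πh)) ∫ e^{-itx/h} φ_K(t)/φ_ν(t/h) dt`. -/
noncomputable def deconvKernel (φK φU : ℝ → ℂ) (h x : ℝ) : ℂ :=
  (1 / (2 * Real.pi * h) : ℝ) •
    ∫ t : ℝ, Complex.exp (-(Complex.I * (t : ℂ) * (x : ℂ) / (h : ℂ))) * (φK t / φU (t / h))

/-- Convolution of two measures on `ℝ`. -/
noncomputable def mconv (μ ν : Measure ℝ) : Measure ℝ :=
  (μ.prod ν).map (fun p => p.1 + p.2)

/-!
Integrating `w ↦ e^{-it(x-w)/h}` against a measure `P` gives `e^{-itx/h} φ_P(t/h)`, so by Fubini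
smoothing a deconvolution kernel with `P` multiplies its numerator `φ_K(t)` by `φ_P(t/h)`. For
`P = μ ∗ ν` this factor is `φ_μ(t/h) φ_ν(t/h)`: the noise factor `φ_ν(t/h)` cancels the denominator,
leaving what one gets by smoothing with `μ` the kernel whose denominator is `1`. By Fourier
inversion the latter is the ordinary rescaled kernel `h⁻¹ K(·/h)`.
-/

open scoped FourierTransform

lemma integrable_div_of_hasCompactSupport {X 𝕜 : Type*} [TopologicalSpace X] [MeasurableSpace X]
    [OpensMeasurableSpace X] [NormedField 𝕜] [SecondCountableTopologyEither X 𝕜] {P : Measure X}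
    {f g : X → 𝕜} (hf : Integrable f P) (hf_supp : HasCompactSupport f)
    (hg : ContinuousOn g (tsupport f)) (hg_ne : ∀ a ∈ tsupport f, g a ≠ 0) :
    Integrable (fun a ↦ f a / g a) P := by
  have support_subset : Function.support (fun a ↦ f a / g a) ⊆ tsupport f := by
    intro a ha
    exact subset_tsupport f (div_ne_zero_iff.mp ha).1
  rw [← integrableOn_iff_integrable_of_support_subset support_subset]
  simp_rw [div_eq_mul_inv]
  exact hf.integrableOn.mul_continuousOn_of_subset (hg.inv₀ hg_ne)
    (isClosed_tsupport f).measurableSet hf_supp Subset.rfl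

lemma charFunM_eq_charFun (ν : Measure ℝ) : charFunM ν = charFun ν := by
  ext t
  simp only [charFunM, charFun_apply_real, mul_comm, mul_left_comm]

lemma continuous_charFunM (ν : Measure ℝ) [IsFiniteMeasure ν] : Continuous (charFunM ν) :=
  charFunM_eq_charFun ν ▸ continuous_charFun

lemma mconv_eq_conv (μ ν : Measure ℝ) : mconv μ ν = μ ∗ ν := rfl

lemma charFunM_mconv (μ ν : Measure ℝ) [IsFiniteMeasure μ] [IsFiniteMeasure ν] (t : ℝ) :
    charFunM (mconv μ ν) t = charFunM μ t * charFunM ν t := by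
  simp only [charFunM_eq_charFun, mconv_eq_conv, charFun_conv]

instance isFiniteMeasure_mconv (μ ν : Measure ℝ) [IsFiniteMeasure μ] [IsFiniteMeasure ν] :
    IsFiniteMeasure (mconv μ ν) :=
  inferInstanceAs (IsFiniteMeasure (μ ∗ ν))

lemma fourier_ofReal_eq_fourierK (K : ℝ → ℝ) (w : ℝ) :
    𝓕 (fun v ↦ (K v : ℂ)) w = fourierK K (-(2 * Real.pi) * w) := by
  rw [Real.fourier_eq', fourierK]
  refine integral_congr_ae (.of_forall fun v ↦ ?_)
  simp only [smul_eq_mul, RCLike.inner_apply, conj_trivial]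
  congr 2
  push_cast
  ring

lemma integral_cexp_neg_smul_eq_fourierInv {E : Type*} [NormedAddCommGroup E] [NormedSpace ℂ E]
    (g : ℝ → E) (y : ℝ) :
    ∫ t : ℝ, Complex.exp (-(Complex.I * t * y)) • g t
      = (2 * Real.pi) • 𝓕⁻ (fun w ↦ g (-(2 * Real.pi) * w)) y := by
  have change_of_variables := Measure.integral_comp_mul_left
    (fun t : ℝ ↦ Complex.exp (-(Complex.I * t * y)) • g t) (-(2 * Real.pi))
  rw [inv_neg, abs_neg, abs_of_pos (by positivity), eq_inv_smul_iff₀ (by positivity)]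
    at change_of_variables
  rw [← change_of_variables, Real.fourierInv_eq']
  congr! 5 with w
  simp only [RCLike.inner_apply, conj_trivial]
  push_cast
  ring

theorem integral_cexp_neg_mul_fourierK {K : ℝ → ℝ} {y : ℝ} (hKy : ContinuousAt K y)
    (hKint : Integrable K) (hφKint : Integrable (fourierK K)) :
    ∫ t : ℝ, Complex.exp (-(Complex.I * t * y)) * fourierK K t = (2 * Real.pi) • (K y : ℂ) := by
  have fourier_eq := funext (fourier_ofReal_eq_fourierK K)
  have integrable_fourier : Integrable (𝓕 fun v ↦ (K v : ℂ)) := by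
    rw [fourier_eq]
    exact hφKint.comp_mul_left' (neg_ne_zero.mpr Real.two_pi_pos.ne')
  have inversion := hKint.ofReal.fourierInv_fourier_eq integrable_fourier
    (Complex.continuous_ofReal.continuousAt.comp hKy)
  rw [fourier_eq] at inversion
  simpa only [smul_eq_mul, inversion] using integral_cexp_neg_smul_eq_fourierInv (fourierK K) y

lemma deconvKernel_fourierK_one {K : ℝ → ℝ} {h x : ℝ} (hh : h ≠ 0) (hKx : ContinuousAt K (x / h))
    (hKint : Integrable K) (hφKint : Integrable (fourierK K)) :
    deconvKernel (fourierK K) 1 h x = ((h⁻¹ * K (x / h) : ℝ) : ℂ) := by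
  have inversion := integral_cexp_neg_mul_fourierK hKx hKint hφKint
  simp only [Complex.ofReal_div, ← mul_div_assoc] at inversion
  simp only [deconvKernel, Pi.one_apply, div_one, inversion, Complex.real_smul,
    ← Complex.ofReal_mul]
  congr 1
  field_simp

lemma integral_cexp_sub_eq_mul_charFunM (P : Measure ℝ) (h x t : ℝ) :
    ∫ w, Complex.exp (-(Complex.I * t * (x - w : ℝ) / h)) ∂P
      = Complex.exp (-(Complex.I * t * x / h)) * charFunM P (t / h) := by
  rw [charFunM, ← integral_const_mul]
  congr! 2
  rw [← Complex.exp_add]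
  push_cast
  ring_nf

lemma integrable_prod_cexp_sub_mul {P : Measure ℝ} [IsFiniteMeasure P] {g : ℝ → ℂ}
    (hg : Integrable g) (h x : ℝ) :
    Integrable (fun p : ℝ × ℝ ↦ Complex.exp (-(Complex.I * p.2 * (x - p.1 : ℝ) / h)) * g p.2)
      (P.prod volume) := by
  refine (hg.comp_snd P).bdd_mul (c := 1) (by fun_prop) (.of_forall fun p ↦ ?_)
  simp [Complex.norm_exp]

theorem integral_deconvKernel_sub {P : Measure ℝ} [IsFiniteMeasure P] {φK φU : ℝ → ℂ} {h : ℝ}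
    (hφ : Integrable fun t ↦ φK t / φU (t / h)) (x : ℝ) :
    ∫ w, deconvKernel φK φU h (x - w) ∂P
      = deconvKernel (fun t ↦ φK t * charFunM P (t / h)) φU h x := by
  simp only [deconvKernel]
  rw [integral_smul, integral_integral_swap (integrable_prod_cexp_sub_mul hφ h x)]
  congr! 3 with t
  rw [integral_mul_const, integral_cexp_sub_eq_mul_charFunM]
  ring

lemma deconvKernel_mul_charFunM_mconv {μ ν : Measure ℝ} [IsFiniteMeasure μ] [IsFiniteMeasure ν]
    {φK : ℝ → ℂ} {h : ℝ} (hφν : ∀ t ∈ Function.support φK, charFunM ν (t / h) ≠ 0) (x : ℝ) :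
    deconvKernel (fun t ↦ φK t * charFunM (mconv μ ν) (t / h)) (charFunM ν) h x
      = deconvKernel (fun t ↦ φK t * charFunM μ (t / h)) 1 h x := by
  simp only [deconvKernel, charFunM_mconv, Pi.one_apply, div_one]
  congr! 4 with t
  by_cases ht : φK t = 0
  · simp [ht]
  · rw [← mul_assoc, mul_div_cancel_right₀ _ (hφν t ht)]

theorem deconv_kernel_unbiased_measure_general
    {μ ν : Measure ℝ} [IsFiniteMeasure μ] [IsFiniteMeasure ν] {K : ℝ → ℝ} {x h : ℝ} (hh : h ≠ 0)
    (hKcont : ∀ᵐ u ∂μ, ContinuousAt K ((x - u) / h)) (hKint : Integrable K)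
    (hφKint : Integrable (fourierK K))
    (hφν : ∀ t ∈ Function.support (fourierK K), charFunM ν (t / h) ≠ 0)
    (hquot : Integrable fun t ↦ fourierK K t / charFunM ν (t / h)) :
    ∫ w, deconvKernel (fourierK K) (charFunM ν) h (x - w) ∂(mconv μ ν)
      = ∫ u, ((h⁻¹ * K ((x - u) / h) : ℝ) : ℂ) ∂μ :=
  calc
    ∫ w, deconvKernel (fourierK K) (charFunM ν) h (x - w) ∂(mconv μ ν)
    _ = deconvKernel (fun t ↦ fourierK K t * charFunM (mconv μ ν) (t / h)) (charFunM ν) h x :=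
      integral_deconvKernel_sub hquot x
    _ = deconvKernel (fun t ↦ fourierK K t * charFunM μ (t / h)) 1 h x :=
      deconvKernel_mul_charFunM_mconv hφν x
    _ = ∫ u, deconvKernel (fourierK K) 1 h (x - u) ∂μ :=
      (integral_deconvKernel_sub (by simpa using hφKint) x).symm
    _ = ∫ u, ((h⁻¹ * K ((x - u) / h) : ℝ) : ℂ) ∂μ :=
      integral_congr_ae <| hKcont.mono fun _ hu ↦ deconvKernel_fourierK_one hh hu hKint hφKint

/-- the deconvolution kernel integrated against `μ ∗ ν` reproduces the
ordinary kernel smoother integrated against `μ`. -/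
theorem deconv_kernel_unbiased_measure
    (ν : Measure ℝ) [IsProbabilityMeasure ν]
    (hφν : ∀ t : ℝ, charFunM ν t ≠ 0)
    (K : ℝ → ℝ) (hKcont : Continuous K) (hKint : Integrable K)
    (hφKint : Integrable (fourierK K))
    (hφKsupp : Function.support (fourierK K) ⊆ Set.Icc (-1 : ℝ) 1)
    (μ : Measure ℝ) [IsProbabilityMeasure μ]
    (x h : ℝ) (hh : 0 < h) :
    ∫ w, deconvKernel (fourierK K) (charFunM ν) h (x - w) ∂(mconv μ ν)
      = ∫ u, ((h⁻¹ * K ((x - u) / h) : ℝ) : ℂ) ∂μ := by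
  have hquot : Integrable fun t ↦ fourierK K t / charFunM ν (t / h) :=
    integrable_div_of_hasCompactSupport hφKint
      (.of_support_subset_isCompact isCompact_Icc hφKsupp)
      ((continuous_charFunM ν).comp (continuous_id.div_const h)).continuousOn fun _ _ ↦ hφν _
  exact deconv_kernel_unbiased_measure_general hh.ne' (.of_forall fun _ ↦ hKcont.continuousAt)
    hKint hφKint (fun _ _ ↦ hφν _) hquot
end

section
/- For σ₁, σ₂ > 0 and ρ ∈ (−1, 1), let f be the centered bivariate normal density with variances σ₁², σ₂² and correlation ρ, and let f₁₁ and f₂₂ denote its second partial derivatives with respect to x and y respectively. Then ∫_{ℝ²} f₁₁(x, y) f₂₂(x, y) dx dy = (1 + 2ρ²) / (16π (1 − ρ²)^{5/2} σ₁³ σ₂³). -/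
open MeasureTheory

/-- The centered bivariate normal density with variances `σ₁², σ₂²` and correlation `ρ`. -/
noncomputable def bvnDensity (σ₁ σ₂ ρ : ℝ) (x y : ℝ) : ℝ :=
  (2 * Real.pi * σ₁ * σ₂ * Real.sqrt (1 - ρ ^ 2))⁻¹ *
    Real.exp (-(x ^ 2 / σ₁ ^ 2 - 2 * ρ * x * y / (σ₁ * σ₂) + y ^ 2 / σ₂ ^ 2) /
      (2 * (1 - ρ ^ 2)))

/-!
The density is a multiple of `exp (-q / 2)`, where `q = a x² + 2 b x y + c y²` is the quadratic form
of the precision matrix, so `f₁₁ f₂₂` is a multiple of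
`((a x + b y)² - a) ((b x + c y)² - c) exp (-q)`. The shear `y ↦ y - (b / c) x` preserves area and
completes the square, `q = d x² + c y²` with `d = a - b² / c`; since it also turns `b x + c y` into
`c y` and `a x + b y` into `d x + b y`, the integral is a combination of products of moments of
one-dimensional Gaussians of order at most four.
-/

section GaussianMoments

variable {a : ℝ}

lemma integrable_pow_mul_exp_neg_mul_sq (ha : 0 < a) (n : ℕ) :
    Integrable fun x : ℝ => x ^ n * Real.exp (-a * x ^ 2) := by
  have hn : (-1 : ℝ) < n := neg_one_lt_zero.trans_le n.cast_nonneg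
  simpa only [Real.rpow_natCast] using integrable_rpow_mul_exp_neg_mul_sq ha hn

lemma integral_pow_add_two_mul_exp_neg_mul_sq (ha : 0 < a) (n : ℕ) :
    ∫ x : ℝ, x ^ (n + 2) * Real.exp (-a * x ^ 2) =
      (n + 1) / (2 * a) * ∫ x : ℝ, x ^ n * Real.exp (-a * x ^ 2) := by
  have hderiv (x : ℝ) : HasDerivAt (fun x : ℝ => x ^ (n + 1) * Real.exp (-a * x ^ 2))
      ((n + 1) * (x ^ n * Real.exp (-a * x ^ 2)) -
        2 * a * (x ^ (n + 2) * Real.exp (-a * x ^ 2))) x := by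
    refine ((hasDerivAt_pow (n + 1) x).mul
      ((hasDerivAt_pow 2 x).const_mul (-a)).exp).congr_deriv ?_
    push_cast
    ring
  have hterm₀ := (integrable_pow_mul_exp_neg_mul_sq ha n).const_mul (n + 1 : ℝ)
  have hterm₂ := (integrable_pow_mul_exp_neg_mul_sq ha (n + 2)).const_mul (2 * a)
  have hzero := integral_eq_zero_of_hasDerivAt_of_integrable hderiv (hterm₀.sub hterm₂)
    (integrable_pow_mul_exp_neg_mul_sq ha (n + 1))
  rw [integral_sub hterm₀ hterm₂, integral_const_mul, integral_const_mul] at hzero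
  rw [div_mul_eq_mul_div, eq_div_iff (by positivity)]
  linarith

lemma integral_sq_mul_exp_neg_mul_sq (ha : 0 < a) :
    ∫ x : ℝ, x ^ 2 * Real.exp (-a * x ^ 2) = √(Real.pi / a) / (2 * a) := by
  have hrec := integral_pow_add_two_mul_exp_neg_mul_sq ha 0
  simp only [pow_zero, one_mul, integral_gaussian] at hrec
  rw [hrec]
  ring

lemma integrable_pow_mul_sq_sub_mul_exp_neg_mul_sq (ha : 0 < a) (n : ℕ) :
    Integrable fun x : ℝ => x ^ n * (((a * x) ^ 2 - a) * Real.exp (-a * x ^ 2)) := by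
  refine (((integrable_pow_mul_exp_neg_mul_sq ha (n + 2)).const_mul (a ^ 2)).sub
    ((integrable_pow_mul_exp_neg_mul_sq ha n).const_mul a)).congr (.of_forall fun x => ?_)
  simp only [Pi.sub_apply]
  ring

lemma integral_pow_mul_sq_sub_mul_exp_neg_mul_sq (ha : 0 < a) (n : ℕ) :
    ∫ x : ℝ, x ^ n * (((a * x) ^ 2 - a) * Real.exp (-a * x ^ 2)) =
      (n - 1) * a / 2 * ∫ x : ℝ, x ^ n * Real.exp (-a * x ^ 2) := by
  have hexpand (x : ℝ) : x ^ n * (((a * x) ^ 2 - a) * Real.exp (-a * x ^ 2)) =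
      a ^ 2 * (x ^ (n + 2) * Real.exp (-a * x ^ 2)) - a * (x ^ n * Real.exp (-a * x ^ 2)) := by
    ring
  simp_rw [hexpand]
  rw [integral_sub ((integrable_pow_mul_exp_neg_mul_sq ha (n + 2)).const_mul _)
      ((integrable_pow_mul_exp_neg_mul_sq ha n).const_mul _),
    integral_const_mul, integral_const_mul, integral_pow_add_two_mul_exp_neg_mul_sq ha]
  field

end GaussianMoments

section ProductIntegrals

lemma integral_prod_add_comp_fst {α G E : Type*} [MeasurableSpace α] [MeasurableSpace G]
    [AddGroup G] [MeasurableAdd₂ G] [MeasurableNeg G] [NormedAddCommGroup E] [NormedSpace ℝ E]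
    (μ : Measure α) [SFinite μ] (ν : Measure G) [SFinite ν] [ν.IsAddRightInvariant]
    {φ : α → G} (hφ : Measurable φ) (F : α × G → E) :
    ∫ p, F (p.1, p.2 + φ p.1) ∂(μ.prod ν) = ∫ p, F p ∂(μ.prod ν) := by
  let shear : α × G ≃ᵐ α × G :=
    { toEquiv := Equiv.prodShear (Equiv.refl α) fun x => Equiv.addRight (φ x)
      measurable_toFun := measurable_fst.prodMk (measurable_snd.add (hφ.comp measurable_fst))
      measurable_invFun :=
        measurable_fst.prodMk (measurable_snd.add (hφ.comp measurable_fst).neg) }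
  have hshear : MeasurePreserving shear (μ.prod ν) (μ.prod ν) :=
    (MeasurePreserving.id μ).skew_product (g := fun x y => y + φ x)
      (measurable_snd.add (hφ.comp measurable_fst))
      (.of_forall fun x => map_add_right_eq_self ν (φ x))
  exact hshear.integral_comp' F

lemma integral_prod_linear_sq_sub_mul {μ ν : Measure ℝ} [SFinite μ] [SFinite ν] {g h : ℝ → ℝ}
    (hg : ∀ i ≤ 2, Integrable (fun x => x ^ i * g x) μ)
    (hh : ∀ i ≤ 2, Integrable (fun y => y ^ i * h y) ν) (s t r : ℝ) :
    ∫ p : ℝ × ℝ, ((s * p.1 + t * p.2) ^ 2 - r) * (g p.1 * h p.2) ∂(μ.prod ν) =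
      s ^ 2 * ((∫ x, x ^ 2 * g x ∂μ) * ∫ y, h y ∂ν) +
      2 * s * t * ((∫ x, x * g x ∂μ) * ∫ y, y * h y ∂ν) +
      t ^ 2 * ((∫ x, g x ∂μ) * ∫ y, y ^ 2 * h y ∂ν) - r * ((∫ x, g x ∂μ) * ∫ y, h y ∂ν) := by
  have hterm_integrable (i j : ℕ) (hi : i ≤ 2) (hj : j ≤ 2) (k : ℝ) : Integrable
      (fun p : ℝ × ℝ => k * ((p.1 ^ i * g p.1) * (p.2 ^ j * h p.2))) (μ.prod ν) :=
    ((hg i hi).mul_prod (hh j hj)).const_mul k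
  have hterm_integral (i j : ℕ) (k : ℝ) :
      ∫ p : ℝ × ℝ, k * ((p.1 ^ i * g p.1) * (p.2 ^ j * h p.2)) ∂(μ.prod ν) =
        k * ((∫ x, x ^ i * g x ∂μ) * ∫ y, y ^ j * h y ∂ν) := by
    rw [integral_const_mul, integral_prod_mul (fun x => x ^ i * g x) (fun y => y ^ j * h y)]
  have hexpand (p : ℝ × ℝ) : ((s * p.1 + t * p.2) ^ 2 - r) * (g p.1 * h p.2) =
      s ^ 2 * ((p.1 ^ 2 * g p.1) * (p.2 ^ 0 * h p.2)) +
      2 * s * t * ((p.1 ^ 1 * g p.1) * (p.2 ^ 1 * h p.2)) +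
      t ^ 2 * ((p.1 ^ 0 * g p.1) * (p.2 ^ 2 * h p.2)) -
      r * ((p.1 ^ 0 * g p.1) * (p.2 ^ 0 * h p.2)) := by
    ring
  have h₂₀ := hterm_integrable 2 0 le_rfl (by norm_num) (s ^ 2)
  have h₁₁ := hterm_integrable 1 1 (by norm_num) (by norm_num) (2 * s * t)
  have h₀₂ := hterm_integrable 0 2 (by norm_num) le_rfl (t ^ 2)
  have h₀₀ := hterm_integrable 0 0 (by norm_num) (by norm_num) r
  simp_rw [hexpand]
  rw [integral_sub ((h₂₀.fun_add h₁₁).fun_add h₀₂) h₀₀, integral_add (h₂₀.fun_add h₁₁) h₀₂,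
    integral_add h₂₀ h₁₁, hterm_integral, hterm_integral, hterm_integral, hterm_integral]
  simp only [pow_zero, pow_one, one_mul]

lemma sqrt_pi_div_mul_sqrt_pi_div {d : ℝ} (hd : 0 ≤ d) (c : ℝ) :
    √(Real.pi / d) * √(Real.pi / c) = Real.pi / √(d * c) := by
  rw [← Real.sqrt_mul (div_nonneg Real.pi_nonneg hd), div_mul_div_comm,
    Real.sqrt_div (mul_self_nonneg _), Real.sqrt_mul_self Real.pi_nonneg]

lemma integral_linear_sq_sub_mul_gaussian_mul {c d : ℝ} (hc : 0 < c) (hd : 0 < d) (s t r : ℝ) :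
    ∫ p : ℝ × ℝ, ((s * p.1 + t * p.2) ^ 2 - r) *
        (Real.exp (-d * p.1 ^ 2) * (((c * p.2) ^ 2 - c) * Real.exp (-c * p.2 ^ 2))) =
      Real.pi / √(d * c) * (r * c / 2 + t ^ 2 / 4 - s ^ 2 * c / (4 * d)) := by
  have hmoment₀ : ∫ y : ℝ, ((c * y) ^ 2 - c) * Real.exp (-c * y ^ 2) =
      -(c / 2 * √(Real.pi / c)) := by
    have h := integral_pow_mul_sq_sub_mul_exp_neg_mul_sq hc 0
    simp only [pow_zero, one_mul, integral_gaussian] at h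
    rw [h]
    ring
  have hmoment₁ : ∫ y : ℝ, y * (((c * y) ^ 2 - c) * Real.exp (-c * y ^ 2)) = 0 := by
    simpa using integral_pow_mul_sq_sub_mul_exp_neg_mul_sq hc 1
  have hmoment₂ : ∫ y : ℝ, y ^ 2 * (((c * y) ^ 2 - c) * Real.exp (-c * y ^ 2)) =
      √(Real.pi / c) / 4 := by
    rw [integral_pow_mul_sq_sub_mul_exp_neg_mul_sq hc, integral_sq_mul_exp_neg_mul_sq hc]
    field
  rw [Measure.volume_eq_prod,
    integral_prod_linear_sq_sub_mul (h := fun y => ((c * y) ^ 2 - c) * Real.exp (-c * y ^ 2))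
      (fun i _ => integrable_pow_mul_exp_neg_mul_sq hd i)
      (fun i _ => integrable_pow_mul_sq_sub_mul_exp_neg_mul_sq hc i),
    integral_gaussian, integral_sq_mul_exp_neg_mul_sq hd, hmoment₀, hmoment₁, hmoment₂,
    ← sqrt_pi_div_mul_sqrt_pi_div hd.le]
  ring

end ProductIntegrals

/-- The unnormalized centered Gaussian on the plane with precision (inverse covariance) matrix
`!![a, b; b, c]`. -/
noncomputable def planeGaussian (a b c x y : ℝ) : ℝ :=
  Real.exp (-(a * x ^ 2 + 2 * b * x * y + c * y ^ 2) / 2)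

namespace planeGaussian

variable (a b c x y : ℝ)

lemma swap : planeGaussian a b c x y = planeGaussian c b a y x := by
  unfold planeGaussian
  ring_nf

lemma hasDerivAt_fst : HasDerivAt (fun x => planeGaussian a b c x y)
    (-(a * x + b * y) * planeGaussian a b c x y) x := by
  have hquad : HasDerivAt (fun x => -(a * x ^ 2 + 2 * b * x * y + c * y ^ 2) / 2)
      (-(a * x + b * y)) x := by
    refine (((((hasDerivAt_pow 2 x).const_mul a).add
      (((hasDerivAt_id' x).const_mul (2 * b)).mul_const y)).add_const
        (c * y ^ 2)).neg.div_const 2).congr_deriv ?_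
    push_cast
    ring
  exact hquad.exp.congr_deriv (mul_comm _ _)

lemma iteratedDeriv_two_fst : iteratedDeriv 2 (fun x => planeGaussian a b c x y) x =
    ((a * x + b * y) ^ 2 - a) * planeGaussian a b c x y := by
  have hlin : HasDerivAt (fun x => -(a * x + b * y)) (-a) x :=
    (((hasDerivAt_id' x).const_mul a).add_const (b * y)).neg.congr_deriv (by ring)
  rw [iteratedDeriv_succ, iteratedDeriv_one,
    funext fun x => (hasDerivAt_fst a b c x y).deriv,
    (hlin.fun_mul (hasDerivAt_fst a b c x y)).deriv]
  ring

lemma iteratedDeriv_two_snd : iteratedDeriv 2 (fun y => planeGaussian a b c x y) y =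
    ((b * x + c * y) ^ 2 - c) * planeGaussian a b c x y := by
  simp only [swap a b c x, iteratedDeriv_two_fst, add_comm (b * x)]

lemma iteratedDeriv_two_mul_iteratedDeriv_two :
    iteratedDeriv 2 (fun x => planeGaussian a b c x y) x *
        iteratedDeriv 2 (fun y => planeGaussian a b c x y) y =
      ((a * x + b * y) ^ 2 - a) * ((b * x + c * y) ^ 2 - c) *
        Real.exp (-(a * x ^ 2 + 2 * b * x * y + c * y ^ 2)) := by
  have hsq : planeGaussian a b c x y ^ 2 =
      Real.exp (-(a * x ^ 2 + 2 * b * x * y + c * y ^ 2)) := by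
    rw [planeGaussian, ← Real.exp_nat_mul]
    push_cast
    ring_nf
  rw [iteratedDeriv_two_fst, iteratedDeriv_two_snd, ← hsq]
  ring

variable {a b c}

lemma shear_quadratic_integrand {d : ℝ} (hc : c ≠ 0) (hd : d = a - b ^ 2 / c) :
    ((a * x + b * (y + -(b / c) * x)) ^ 2 - a) * ((b * x + c * (y + -(b / c) * x)) ^ 2 - c) *
        Real.exp (-(a * x ^ 2 + 2 * b * x * (y + -(b / c) * x) + c * (y + -(b / c) * x) ^ 2)) =
      ((d * x + b * y) ^ 2 - a) *
        (Real.exp (-d * x ^ 2) * (((c * y) ^ 2 - c) * Real.exp (-c * y ^ 2))) := by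
  have hfst : a * x + b * (y + -(b / c) * x) = d * x + b * y := by rw [hd]; ring
  have hsnd : b * x + c * (y + -(b / c) * x) = c * y := by field
  have hexp : -(a * x ^ 2 + 2 * b * x * (y + -(b / c) * x) + c * (y + -(b / c) * x) ^ 2) =
      -d * x ^ 2 + -c * y ^ 2 := by rw [hd]; field
  rw [hfst, hsnd, hexp, Real.exp_add]
  ring

lemma integral_iteratedDeriv_two_mul_iteratedDeriv_two (hc : 0 < c) (hdet : b ^ 2 < a * c) :
    ∫ p : ℝ × ℝ, iteratedDeriv 2 (fun x => planeGaussian a b c x p.2) p.1 *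
        iteratedDeriv 2 (fun y => planeGaussian a b c p.1 y) p.2 =
      Real.pi * (a * c + 2 * b ^ 2) / (4 * √(a * c - b ^ 2)) := by
  obtain ⟨d, hd⟩ : ∃ d, d = a - b ^ 2 / c := ⟨_, rfl⟩
  have hdc : d * c = a * c - b ^ 2 := by rw [hd]; field
  have hd_pos : 0 < d := by rwa [hd, sub_pos, div_lt_iff₀ hc]
  have hcoeff : a * c / 2 + b ^ 2 / 4 - d ^ 2 * c / (4 * d) = (a * c + 2 * b ^ 2) / 4 := by
    have hcancel : d ^ 2 * c / (4 * d) = d * c / 4 := by field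
    rw [hcancel, hdc]
    ring
  simp_rw [iteratedDeriv_two_mul_iteratedDeriv_two]
  rw [Measure.volume_eq_prod, ← integral_prod_add_comp_fst volume volume
    (measurable_const_mul (-(b / c)))]
  simp_rw [shear_quadratic_integrand _ _ hc.ne' hd]
  rw [← Measure.volume_eq_prod, integral_linear_sq_sub_mul_gaussian_mul hc hd_pos, hcoeff, hdc]
  ring

end planeGaussian

lemma bvnDensity_eq_const_mul_planeGaussian (σ₁ σ₂ ρ x y : ℝ) :
    bvnDensity σ₁ σ₂ ρ x y = (2 * Real.pi * σ₁ * σ₂ * √(1 - ρ ^ 2))⁻¹ *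
      planeGaussian (1 / (σ₁ ^ 2 * (1 - ρ ^ 2))) (-ρ / (σ₁ * σ₂ * (1 - ρ ^ 2)))
        (1 / (σ₂ ^ 2 * (1 - ρ ^ 2))) x y := by
  rw [bvnDensity, planeGaussian]
  generalize 1 - ρ ^ 2 = k
  ring_nf

lemma det_bvnDensity_precision {σ₁ σ₂ ρ : ℝ} (hσ₁ : σ₁ ≠ 0) (hσ₂ : σ₂ ≠ 0)
    (hρ : 1 - ρ ^ 2 ≠ 0) :
    1 / (σ₁ ^ 2 * (1 - ρ ^ 2)) * (1 / (σ₂ ^ 2 * (1 - ρ ^ 2))) -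
      (-ρ / (σ₁ * σ₂ * (1 - ρ ^ 2))) ^ 2 = 1 / ((σ₁ * σ₂) ^ 2 * (1 - ρ ^ 2)) := by
  field

lemma rpow_five_halves {x : ℝ} (hx : 0 ≤ x) : x ^ ((5 : ℝ) / 2) = x ^ 2 * √x := by
  rw [Real.rpow_div_two_eq_sqrt _ hx, Real.rpow_ofNat, pow_succ, pow_mul √x 2 2, Real.sq_sqrt hx]

/-- `∫∫ f₁₁ f₂₂ dx dy = (1 + 2ρ²) / (16π (1 − ρ²)^{5/2} σ₁³ σ₂³)` for the
centered bivariate normal density `f`, where `f₁₁ = ∂²f/∂x²` and `f₂₂ = ∂²f/∂y²`. -/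
theorem bvn_f11_f22_integral
    (σ₁ σ₂ ρ : ℝ) (hσ₁ : 0 < σ₁) (hσ₂ : 0 < σ₂) (hρ : ρ ∈ Set.Ioo (-1 : ℝ) 1) :
    ∫ p : ℝ × ℝ, (iteratedDeriv 2 (fun x => bvnDensity σ₁ σ₂ ρ x p.2) p.1) *
        (iteratedDeriv 2 (fun y => bvnDensity σ₁ σ₂ ρ p.1 y) p.2)
      = (1 + 2 * ρ ^ 2) / (16 * Real.pi * (1 - ρ ^ 2) ^ ((5 : ℝ) / 2) * σ₁ ^ 3 * σ₂ ^ 3) := by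
  have hk : 0 < 1 - ρ ^ 2 := sub_pos.mpr ((sq_lt_one_iff_abs_lt_one ρ).mpr (abs_lt.mpr hρ))
  have hdet := det_bvnDensity_precision hσ₁.ne' hσ₂.ne' hk.ne'
  have hdet_pos : (-ρ / (σ₁ * σ₂ * (1 - ρ ^ 2))) ^ 2 <
      1 / (σ₁ ^ 2 * (1 - ρ ^ 2)) * (1 / (σ₂ ^ 2 * (1 - ρ ^ 2))) := by
    rw [← sub_pos, hdet]
    positivity
  have hsqrt_det : √(1 / ((σ₁ * σ₂) ^ 2 * (1 - ρ ^ 2))) = 1 / (σ₁ * σ₂ * √(1 - ρ ^ 2)) := by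
    rw [Real.sqrt_div zero_le_one, Real.sqrt_one, Real.sqrt_mul (by positivity),
      Real.sqrt_sq (by positivity)]
  simp_rw [bvnDensity_eq_const_mul_planeGaussian, iteratedDeriv_const_mul_field,
    mul_mul_mul_comm _ (iteratedDeriv _ _ _), integral_const_mul]
  rw [planeGaussian.integral_iteratedDeriv_two_mul_iteratedDeriv_two (by positivity) hdet_pos,
    hdet, hsqrt_det, rpow_five_halves hk.le]
  field
end
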